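/- For every integer n ≥ 1, the signed sum over all derangements π of [n] of the monomial obtained by multiplying x_j over all right-to-left minima values j of π and y_j over all excedance values j of π equals (-1)^(n-1) times the sum over j from 1 to n-1 of x_1⋯x_j · y_{j+1}⋯y_n. That is, ∑_{π ∈ D_n} (-1)^{inv(π)} (∏_{j ∈ RLMv(π)} x_j)(∏_{j ∈ EXCv(π)} y_j) = (-1)^{n-1} ∑_{j=1}^{n-1} x_1⋯x_j y_{j+1}⋯y_n, as an identity of polynomials in the commuting variables x_1,…,x_n,y_1,…,y_n. -/

import Mathlib

open Finset MvPolynomial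

/-- Number of inversions of a permutation of `Fin n`
(pairs `p.1 < p.2` with `π p.1 > π p.2`). -/
def inversions {n : ℕ} (π : Equiv.Perm (Fin n)) : ℕ :=
  (Finset.univ.filter fun p : Fin n × Fin n => p.1 < p.2 ∧ π p.2 < π p.1).card

/-- Excedance indices of a permutation. -/
def EXCi {n : ℕ} (π : Equiv.Perm (Fin n)) : Finset (Fin n) :=
  Finset.univ.filter fun i => i < π i

/-- Excedance values of a permutation. -/
def EXCv {n : ℕ} (π : Equiv.Perm (Fin n)) : Finset (Fin n) :=
  (EXCi π).image π

/-- Right-to-left minima indices of a permutation. -/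
def RLMi {n : ℕ} (π : Equiv.Perm (Fin n)) : Finset (Fin n) :=
  Finset.univ.filter fun i => ∀ j, i < j → π i < π j

/-- Right-to-left minima values of a permutation. -/
def RLMv {n : ℕ} (π : Equiv.Perm (Fin n)) : Finset (Fin n) :=
  (RLMi π).image π

/-- The derangements of `Fin n`, i.e. permutations with no fixed point. -/
def derangementsF (n : ℕ) : Finset (Equiv.Perm (Fin n)) :=
  Finset.univ.filter fun π => ∀ i, π i ≠ i

/-! Passing to `σ = π⁻¹` turns right-to-left minimum values and excedance values of `π` into record
positions and deficiency positions of `σ`. If two deficiencies `i < j` have overlapping intervals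
`(σ i, i]` and `(σ j, j]`, exchanging the entries at the lexicographically first such pair reverses
the sign and keeps records and deficiencies. If no two overlap, then no two excedance intervals
overlap either, since every cut is crossed equally often upwards and downwards; hence every
excedance is a record and the weight depends only on the sign and the set of deficiencies. Now
exchanging the values `a` and `a + 1` at the first deficiency `a` that is followed by an excedance
reverses the sign and keeps the deficiencies. The survivors have deficiency set `{j, …, n - 1}` with
`0 < j < n`, which leaves exactly one `n`-cycle for each `j`, having `n - 1` inversions. -/

open Equiv Equiv.Perm

section SignReversing

theorem sum_eq_zero_of_isLeast_involutive {β ι M : Type*} [AddCommGroup M] [LinearOrder ι]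
    [WellFoundedLT ι] {s : Finset β} {f : β → M} (P : β → Set ι) {T : ι → β → β}
    (nonempty : ∀ b ∈ s, (P b).Nonempty) (involutive : ∀ p, Function.Involutive (T p))
    (mem : ∀ b ∈ s, ∀ p, IsLeast (P b) p → T p b ∈ s)
    (isLeast : ∀ b ∈ s, ∀ p, IsLeast (P b) p → IsLeast (P (T p b)) p)
    (apply_eq_neg : ∀ b ∈ s, ∀ p, IsLeast (P b) p → f (T p b) = -f b)
    (ne_self : ∀ b ∈ s, ∀ p, IsLeast (P b) p → T p b ≠ b) :
    ∑ b ∈ s, f b = 0 := by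
  have exists_isLeast : ∀ b ∈ s, ∃ p, IsLeast (P b) p := fun b hb =>
    have ⟨p, hp, hmin⟩ := wellFounded_lt.has_min _ (nonempty b hb)
    ⟨p, hp, fun q hq => not_lt.1 (hmin q hq)⟩
  choose p hp using exists_isLeast
  refine Finset.sum_involution (fun b hb => T (p b hb) b) (fun b hb => ?_)
    (fun b hb _ => ne_self b hb _ (hp b hb)) (fun b hb => mem b hb _ (hp b hb)) (fun b hb => ?_)
  · rw [apply_eq_neg b hb _ (hp b hb), add_neg_cancel]
  · rw [(hp _ (mem b hb _ (hp b hb))).unique (isLeast b hb _ (hp b hb)), involutive]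

end SignReversing

theorem eq_of_eqOn_compl_pair {α : Type*} {σ τ : Perm α} {a b : α}
    (heq : ∀ k, k ≠ a → k ≠ b → σ k = τ k) (hne : σ b ≠ τ a) : σ = τ := by
  have eq_b : σ b = τ b := by
    obtain ⟨c, hc⟩ := τ.surjective (σ b)
    by_contra! hb
    have hcb : c ≠ b := fun h => hb (h ▸ hc).symm
    have hca : c ≠ a := fun h => hne (h ▸ hc).symm
    exact hcb (σ.injective ((heq c hca hcb).trans hc))
  have eq_of_ne : ∀ k, k ≠ a → σ k = τ k := fun k hka => by
    rcases eq_or_ne k b with rfl | hkb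
    exacts [eq_b, heq k hka hkb]
  have eq_a : σ a = τ a := by
    obtain ⟨c, hc⟩ := τ.surjective (σ a)
    by_contra! ha
    have hca : c ≠ a := fun h => ha (h ▸ hc).symm
    exact hca (σ.injective ((eq_of_ne c hca).trans hc))
  ext k
  rcases eq_or_ne k a with rfl | hka
  exacts [eq_a, eq_of_ne k hka]

section LinearOrder

variable {α : Type*} [LinearOrder α] {σ τ : Perm α} {a b i j k : α}

/-- The position `j` carries a record (left-to-right maximum) of `σ`. Records of `π⁻¹` sit at the
right-to-left minimum values of `π`. -/
def IsRecord (σ : Perm α) (j : α) : Prop :=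
  ∀ k < j, σ k < σ j

/-- Pairs of deficiencies `i < j` of `σ` (positions with `σ i < i`) whose intervals `(σ i, i]` and
`(σ j, j]` intersect, ordered lexicographically so that a first such pair can be chosen. -/
def deficiencyOverlaps (σ : Perm α) : Set (α ×ₗ α) :=
  {p | (ofLex p).1 < (ofLex p).2 ∧ σ (ofLex p).1 < (ofLex p).1 ∧ σ (ofLex p).2 < (ofLex p).1}

/-- Adjacent positions of `σ` at which a deficiency is immediately followed by an excedance. -/
def deficiencyDrops (σ : Perm α) : Set (α ×ₗ α) :=
  {p | (ofLex p).1 ⋖ (ofLex p).2 ∧ σ (ofLex p).1 < (ofLex p).1 ∧ (ofLex p).2 < σ (ofLex p).2}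

theorem mem_derangements_iff_of_cmp_eq (h : ∀ k, cmp (τ k) k = cmp (σ k) k) :
    τ ∈ derangements α ↔ σ ∈ derangements α :=
  forall_congr' fun k => not_congr (eq_iff_eq_of_cmp_eq_cmp (h k))

theorem toLex_mul_swap_mem_deficiencyOverlaps (h : toLex (i, j) ∈ deficiencyOverlaps σ) :
    toLex (i, j) ∈ deficiencyOverlaps (σ * swap i j) := by
  obtain ⟨hij, hi, hj⟩ : i < j ∧ σ i < i ∧ σ j < i := h
  exact ⟨hij, by simpa using hj, by simpa using hi⟩

theorem cmp_mul_swap_apply (h : toLex (i, j) ∈ deficiencyOverlaps σ) (k : α) :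
    cmp ((σ * swap i j) k) k = cmp (σ k) k := by
  obtain ⟨hij, hi, hj⟩ : i < j ∧ σ i < i ∧ σ j < i := h
  rw [Perm.mul_apply]
  rcases eq_or_ne k i with rfl | hki
  · rw [swap_apply_left, cmp_eq_lt_iff _ _ |>.2 hj, cmp_eq_lt_iff _ _ |>.2 hi]
  rcases eq_or_ne k j with rfl | hkj
  · rw [swap_apply_right, cmp_eq_lt_iff _ _ |>.2 (hi.trans hij),
      cmp_eq_lt_iff _ _ |>.2 (hj.trans hij)]
  · rw [swap_apply_of_ne_of_ne hki hkj]

theorem isLeast_deficiencyOverlaps_mul_swap (h : IsLeast (deficiencyOverlaps σ) (toLex (i, j))) :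
    IsLeast (deficiencyOverlaps (σ * swap i j)) (toLex (i, j)) := by
  refine ⟨toLex_mul_swap_mem_deficiencyOverlaps h.1, fun p ⟨hkl, hk, hl⟩ => ?_⟩
  obtain ⟨⟨hij, hi, -⟩ : i < j ∧ σ i < i ∧ σ j < i, hmin⟩ := h
  set k := (ofLex p).1
  set l := (ofLex p).2
  rw [Perm.mul_apply] at hk hl
  have hik : i ≤ k := by
    by_contra! hki
    rw [swap_apply_of_ne_of_ne hki.ne (hki.trans hij).ne] at hk
    have hkl' : k < swap i j l := by
      rw [swap_apply_def]
      split_ifs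
      exacts [hki.trans hij, hki, hkl]
    have hle := hmin (a := toLex (k, swap i j l)) ⟨hkl', hk, hl⟩
    exact (Prod.Lex.monotone_fst_ofLex hle).not_gt hki
  refine Prod.Lex.le_iff'.2 ⟨hik, fun hik' : i = k => ?_⟩
  change j ≤ l
  by_contra! hlj
  rw [← hik'] at hkl hl
  rw [swap_apply_of_ne_of_ne hkl.ne' hlj.ne] at hl
  have hle := hmin (a := toLex (i, l)) ⟨hkl, hi, hl⟩
  exact ((Prod.Lex.le_iff'.1 hle).2 rfl).not_gt hlj

theorem swap_apply_lt_iff_of_covBy (hab : a ⋖ b) (hk : k ≠ b) : swap a b i < k ↔ i < k := by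
  have key : a < k ↔ b < k := ⟨fun h => (hab.ge_of_gt h).lt_of_ne' hk, hab.lt.trans⟩
  rw [swap_apply_def]
  split_ifs <;> simp_all

theorem lt_swap_apply_iff_of_covBy (hab : a ⋖ b) (hk : k ≠ a) : k < swap a b i ↔ k < i := by
  have key : k < a ↔ k < b := ⟨fun h => h.trans hab.lt, fun h => (hab.le_of_lt h).lt_of_ne hk⟩
  rw [swap_apply_def]
  split_ifs <;> simp_all

theorem cmp_swap_mul_apply (h : toLex (a, b) ∈ deficiencyDrops σ) (k : α) :
    cmp ((swap a b * σ) k) k = cmp (σ k) k := by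
  obtain ⟨hab, ha, hb⟩ : a ⋖ b ∧ σ a < a ∧ b < σ b := h
  rw [Perm.mul_apply]
  rcases eq_or_ne k a with rfl | hka
  · rw [swap_apply_of_ne_of_ne ha.ne (ha.trans hab.lt).ne]
  rcases eq_or_ne k b with rfl | hkb
  · rw [swap_apply_of_ne_of_ne (hab.lt.trans hb).ne' hb.ne']
  · simp only [cmp, cmpUsing, swap_apply_lt_iff_of_covBy hab hkb,
      lt_swap_apply_iff_of_covBy hab hka]

theorem deficiencyDrops_swap_mul (h : toLex (a, b) ∈ deficiencyDrops σ) :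
    deficiencyDrops (swap a b * σ) = deficiencyDrops σ := by
  have hlt := fun k => lt_iff_lt_of_cmp_eq_cmp (cmp_swap_mul_apply h k)
  have hgt := fun k => lt_iff_lt_of_cmp_eq_cmp (cmp_eq_cmp_symm.1 (cmp_swap_mul_apply h k))
  simp only [deficiencyDrops, hlt, hgt]

theorem deficiencyOverlaps_swap_mul (h : toLex (a, b) ∈ deficiencyDrops σ) :
    deficiencyOverlaps (swap a b * σ) = deficiencyOverlaps σ := by
  have hlt := fun k => lt_iff_lt_of_cmp_eq_cmp (cmp_swap_mul_apply h k)
  ext p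
  refine and_congr_right fun _ => ?_
  rw [hlt]
  exact and_congr_right fun hp =>
    swap_apply_lt_iff_of_covBy h.1 fun hpb => hp.not_gt (hpb ▸ h.2.2)

end LinearOrder

section Fintype

variable {α : Type*} [LinearOrder α] [Fintype α]

theorem card_upcrossings_eq_card_downcrossings (σ : Perm α) (t : α) :
    #{i | i ≤ t ∧ t < σ i} = #{i | t < i ∧ σ i ≤ t} := by
  have card_eq : #{i | i ≤ t} = #{i | σ i ≤ t} := Finset.card_equiv σ.symm (by simp)
  have h := Finset.card_sdiff_comm card_eq
  simpa only [← Finset.filter_and_not, not_le, and_comm (b := t < _)] using h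

end Fintype

section Finite

variable {α : Type*} [LinearOrder α] [Finite α] {σ : Perm α} {i j k : α}

theorem IsRecord.le_apply (h : IsRecord σ j) : j ≤ σ j := by
  by_contra! hlt
  cases nonempty_fintype α
  have down : 0 < #{i | σ j < i ∧ σ i ≤ σ j} := Finset.card_pos.2 ⟨j, by simpa⟩
  rw [← card_upcrossings_eq_card_downcrossings, Finset.card_pos] at down
  obtain ⟨i, hi⟩ := down
  obtain ⟨hij, hji⟩ : i ≤ σ j ∧ σ j < σ i := by simpa using hi
  exact (h i (hij.trans_lt hlt)).not_gt hji

theorem apply_le_of_deficiencyOverlaps_eq_empty (h : deficiencyOverlaps σ = ∅) {e t : α}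
    (het : e < t) (ht : t < σ t) : σ e ≤ t := by
  by_contra! hte
  cases nonempty_fintype α
  have up : 1 < #{i | i ≤ t ∧ t < σ i} :=
    Finset.one_lt_card.2 ⟨e, by simp [het.le, hte], t, by simp [ht], het.ne⟩
  rw [card_upcrossings_eq_card_downcrossings, Finset.one_lt_card] at up
  obtain ⟨a, ha, b, hb, hab⟩ := up
  wlog hlt : a < b generalizing a b
  · exact this b hb a ha hab.symm (hab.lt_or_gt.resolve_left hlt)
  simp only [Finset.mem_filter, Finset.mem_univ, true_and] at ha hb
  exact Set.eq_empty_iff_forall_notMem.1 h (toLex (a, b))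
    ⟨hlt, ha.2.trans_lt ha.1, hb.2.trans_lt ha.1⟩

theorem isRecord_iff_not_apply_lt (hσ : σ ∈ derangements α) (h : deficiencyOverlaps σ = ∅) :
    IsRecord σ j ↔ ¬ σ j < j :=
  ⟨fun hj => hj.le_apply.not_gt, fun hj _ hkj =>
    have hj' : j < σ j := (not_lt.1 hj).lt_of_ne (hσ j).symm
    (apply_le_of_deficiencyOverlaps_eq_empty h hkj hj').trans_lt hj'⟩

theorem IsRecord.mul_swap (hk : IsRecord σ k) (h : toLex (i, j) ∈ deficiencyOverlaps σ) :
    IsRecord (σ * swap i j) k := by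
  obtain ⟨hij, hi, hj⟩ : i < j ∧ σ i < i ∧ σ j < i := h
  have hle := hk.le_apply
  have hki : k ≠ i := by rintro rfl; exact hi.not_ge hle
  have hkj : k ≠ j := by rintro rfl; exact (hj.trans hij).not_ge hle
  intro l hl
  rw [Perm.mul_apply, Perm.mul_apply, swap_apply_of_ne_of_ne hki hkj, swap_apply_def]
  split_ifs with hli hlj
  · exact hj.trans (hli ▸ hl.trans_le hle)
  · exact hi.trans (hij.trans (hlj ▸ hl.trans_le hle))
  · exact hk l hl

theorem isRecord_mul_swap_iff (h : toLex (i, j) ∈ deficiencyOverlaps σ) :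
    IsRecord (σ * swap i j) k ↔ IsRecord σ k :=
  ⟨fun hk => by
    simpa [mul_assoc] using hk.mul_swap (toLex_mul_swap_mem_deficiencyOverlaps h),
    fun hk => hk.mul_swap h⟩

end Finite

section SignedWeight

variable {α R : Type*} [LinearOrder α] [Fintype α] [CommRing R] {σ : Perm α} {i j a b : α}
  (x y : α → R)

open Classical in
/-- The summand of the theorem attached to `π = σ⁻¹`: passing to the inverse turns right-to-left
minimum values and excedance values into record positions and deficiency positions. -/
noncomputable def signedWeight (σ : Perm α) : R :=
  (sign σ : ℤ) * (∏ j with IsRecord σ j, x j) * ∏ j with σ j < j, y j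

theorem signedWeight_of_deficiencyOverlaps_eq_empty (hσ : σ ∈ derangements α)
    (h : deficiencyOverlaps σ = ∅) :
    signedWeight x y σ = (sign σ : ℤ) * ∏ j, if σ j < j then y j else x j := by
  simp only [signedWeight, isRecord_iff_not_apply_lt hσ h, Finset.prod_ite]
  ring

theorem signedWeight_mul_swap (h : toLex (i, j) ∈ deficiencyOverlaps σ) :
    signedWeight x y (σ * swap i j) = -signedWeight x y σ := by
  have hij : i ≠ j := h.1.ne
  have hlt := fun k => lt_iff_lt_of_cmp_eq_cmp (cmp_mul_swap_apply h k)
  classical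
  have hrec : Finset.univ.filter (IsRecord (σ * swap i j)) = Finset.univ.filter (IsRecord σ) :=
    Finset.filter_congr fun _ _ => isRecord_mul_swap_iff h
  simp only [signedWeight, hrec, hlt, Perm.sign_mul, sign_swap hij]
  push_cast
  ring

theorem signedWeight_swap_mul (hσ : σ ∈ derangements α) (h : deficiencyOverlaps σ = ∅)
    (h' : toLex (a, b) ∈ deficiencyDrops σ) :
    signedWeight x y (swap a b * σ) = -signedWeight x y σ := by
  have hab : a ≠ b := h'.1.lt.ne
  have hcmp := cmp_swap_mul_apply h'
  have hlt := fun k => lt_iff_lt_of_cmp_eq_cmp (hcmp k)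
  rw [signedWeight_of_deficiencyOverlaps_eq_empty x y
      ((mem_derangements_iff_of_cmp_eq hcmp).2 hσ)
      ((deficiencyOverlaps_swap_mul h').trans h),
    signedWeight_of_deficiencyOverlaps_eq_empty x y hσ h]
  simp only [hlt, Perm.sign_mul, sign_swap hab]
  push_cast
  ring

open Classical in
theorem sum_signedWeight_of_deficiencyOverlaps_nonempty :
    ∑ σ with σ ∈ derangements α ∧ (deficiencyOverlaps σ).Nonempty, signedWeight x y σ = 0 := by
  refine sum_eq_zero_of_isLeast_involutive deficiencyOverlaps
    (T := fun p σ => σ * swap (ofLex p).1 (ofLex p).2)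
    (fun σ hσ => (Finset.mem_filter.1 hσ).2.2) (fun p => mul_swap_involutive _ _)
    (fun σ hσ p hp => ?_) (fun σ _ p hp => isLeast_deficiencyOverlaps_mul_swap hp)
    (fun σ _ p hp => signedWeight_mul_swap x y hp.1)
    (fun σ _ p hp => mul_swap_eq_iff.not.2 hp.1.1.ne)
  simp only [Finset.mem_filter, Finset.mem_univ, true_and] at hσ ⊢
  exact ⟨(mem_derangements_iff_of_cmp_eq (cmp_mul_swap_apply hp.1)).2 hσ.1,
    _, toLex_mul_swap_mem_deficiencyOverlaps hp.1⟩

open Classical in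
theorem sum_signedWeight_of_deficiencyDrops_nonempty :
    ∑ σ with σ ∈ derangements α ∧ deficiencyOverlaps σ = ∅ ∧ (deficiencyDrops σ).Nonempty,
      signedWeight x y σ = 0 := by
  refine sum_eq_zero_of_isLeast_involutive deficiencyDrops
    (T := fun p σ => swap (ofLex p).1 (ofLex p).2 * σ)
    (fun σ hσ => (Finset.mem_filter.1 hσ).2.2.2) (fun p => swap_mul_involutive _ _)
    (fun σ hσ p hp => ?_) (fun σ _ p hp => (deficiencyDrops_swap_mul hp.1).symm ▸ hp)
    (fun σ hσ p hp => ?_) (fun σ _ p hp => swap_mul_eq_iff.not.2 hp.1.1.lt.ne) <;>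
  simp only [Finset.mem_filter, Finset.mem_univ, true_and] at hσ ⊢
  · exact ⟨(mem_derangements_iff_of_cmp_eq (cmp_swap_mul_apply hp.1)).2 hσ.1,
      (deficiencyOverlaps_swap_mul hp.1).trans hσ.2.1,
      (deficiencyDrops_swap_mul hp.1).symm ▸ hσ.2.2⟩
  · exact signedWeight_swap_mul x y hσ.1 hσ.2.1 hp.1

open Classical in
theorem sum_signedWeight_derangements :
    ∑ σ with σ ∈ derangements α, signedWeight x y σ =
      ∑ σ with σ ∈ derangements α ∧ deficiencyOverlaps σ = ∅ ∧ deficiencyDrops σ = ∅,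
        signedWeight x y σ := by
  rw [← Finset.sum_filter_add_sum_filter_not _ (deficiencyOverlaps · = ∅), Finset.filter_filter,
    Finset.filter_filter, ← Finset.sum_filter_add_sum_filter_not _ (deficiencyDrops · = ∅),
    Finset.filter_filter, Finset.filter_filter]
  simp only [and_assoc, ← ne_eq, ← Set.nonempty_iff_ne_empty,
    sum_signedWeight_of_deficiencyOverlaps_nonempty,
    sum_signedWeight_of_deficiencyDrops_nonempty, add_zero]

end SignedWeight

section Fin

variable {n : ℕ} {σ : Perm (Fin n)} {j : ℕ}

theorem neg_one_pow_inversions (σ : Perm (Fin n)) : (-1) ^ inversions σ = sign σ := by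
  have hsign : ∀ j, ∀ i ∈ Finset.Iio j,
      (if σ i < σ j then 1 else -1 : ℤˣ) = if σ j < σ i then -1 else 1 := by
    intro j i hi
    rcases lt_or_gt_of_ne (σ.injective.ne (Finset.mem_Iio.1 hi).ne) with h | h <;>
      simp [h, h.not_gt]
  rw [sign_eq_prod_prod_Iio, Finset.prod_congr rfl fun j _ => Finset.prod_congr rfl (hsign j),
    inversions, ← Finset.prod_const, Finset.prod_filter, Fintype.prod_prod_type_right]
  refine Finset.prod_congr rfl fun j _ => ?_
  rw [← Finset.filter_gt_eq_Iio, Finset.prod_filter]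
  simp only [ite_and]

theorem RLMv_eq_filter_isRecord [DecidablePred (IsRecord σ⁻¹)] :
    RLMv σ = ({j | IsRecord σ⁻¹ j} : Finset (Fin n)) := by
  ext j
  obtain ⟨i, rfl⟩ := σ.surjective j
  simp only [RLMv, RLMi, Finset.mem_image, Finset.mem_filter, Finset.mem_univ, true_and,
    σ.injective.eq_iff, exists_eq_right]
  refine Iff.trans (forall_congr' fun l => ?_) σ.forall_congr_right
  simp only [Perm.coe_inv, symm_apply_apply]
  rcases lt_trichotomy (σ i) (σ l) with h | h | h
  · simp [h, h.not_gt]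
  · simp [σ.injective h]
  · simp only [h, h.not_gt, imp_false, not_lt, forall_const]
    exact ⟨fun hli => hli.lt_of_ne fun e => h.ne (congrArg σ e), le_of_lt⟩

theorem EXCv_eq_filter : EXCv σ = ({j | σ⁻¹ j < j} : Finset (Fin n)) := by
  ext j
  obtain ⟨i, rfl⟩ := σ.surjective j
  simp [EXCv, EXCi]

open Classical in
theorem sum_derangementsF_eq_sum_signedWeight {R : Type*} [CommRing R] (x y : Fin n → R) :
    ∑ π ∈ derangementsF n,
      (-1) ^ inversions π * (∏ j ∈ RLMv π, x j) * (∏ j ∈ EXCv π, y j) =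
    ∑ σ with σ ∈ derangements (Fin n), signedWeight x y σ := by
  refine Finset.sum_equiv (Equiv.inv _) (fun π => ?_) fun π _ => ?_
  · simp only [derangementsF, Finset.mem_filter, Finset.mem_univ, true_and, Equiv.inv_apply]
    exact π.forall_congr fun i => by simp [eq_comm]
  · simp only [signedWeight, Equiv.inv_apply, RLMv_eq_filter_isRecord, EXCv_eq_filter, sign_inv,
      ← neg_one_pow_inversions]
    push_cast
    rfl

/-- The cycle `0 → 1 → ⋯ → j - 1 → n - 1 → n - 2 → ⋯ → j → 0`, whose deficiencies are the positions
`≥ j`. These permutations are the fixed points of the two sign-reversing involutions. -/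
noncomputable def unimodalCycle (n j : ℕ) (hj : 0 < j) (hjn : j < n) : Perm (Fin n) :=
  let f : Fin n → Fin n := fun i =>
    ⟨if (i : ℕ) + 1 < j then (i : ℕ) + 1 else if (i : ℕ) + 1 = j then n - 1 else
      if (i : ℕ) = j then 0 else (i : ℕ) - 1, by
      split_ifs <;> omega⟩
  have hf : Function.Injective f := fun a b h => by
    simp only [f, Fin.mk.injEq] at h
    grind
  Equiv.ofBijective f (Finite.injective_iff_bijective.1 hf)

theorem val_unimodalCycle (hj : 0 < j) (hjn : j < n) (i : Fin n) :
    (unimodalCycle n j hj hjn i : ℕ) = if (i : ℕ) + 1 < j then (i : ℕ) + 1 else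
      if (i : ℕ) + 1 = j then n - 1 else if (i : ℕ) = j then 0 else (i : ℕ) - 1 :=
  rfl

theorem unimodalCycle_apply_lt_iff (hj : 0 < j) (hjn : j < n) (i : Fin n) :
    unimodalCycle n j hj hjn i < i ↔ j ≤ i := by
  rw [Fin.lt_def, val_unimodalCycle]
  split_ifs <;> omega

theorem unimodalCycle_mem_derangements (hj : 0 < j) (hjn : j < n) :
    unimodalCycle n j hj hjn ∈ derangements (Fin n) := fun i => by
  rw [Ne, Fin.ext_iff, val_unimodalCycle]
  split_ifs <;> omega

theorem deficiencyOverlaps_unimodalCycle (hj : 0 < j) (hjn : j < n) :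
    deficiencyOverlaps (unimodalCycle n j hj hjn) = ∅ := by
  refine Set.eq_empty_iff_forall_notMem.2 fun p ⟨hlt, h₁, h₂⟩ => ?_
  rw [unimodalCycle_apply_lt_iff] at h₁
  rw [Fin.lt_def] at hlt h₂
  rw [val_unimodalCycle] at h₂
  split_ifs at h₂ <;> omega

theorem deficiencyDrops_unimodalCycle (hj : 0 < j) (hjn : j < n) :
    deficiencyDrops (unimodalCycle n j hj hjn) = ∅ := by
  refine Set.eq_empty_iff_forall_notMem.2 fun p ⟨hlt, h₁, h₂⟩ => ?_
  rw [unimodalCycle_apply_lt_iff] at h₁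
  exact h₂.not_gt ((unimodalCycle_apply_lt_iff hj hjn _).2 (h₁.trans hlt.lt.le))

theorem inversions_unimodalCycle (hj : 0 < j) (hjn : j < n) :
    inversions (unimodalCycle n j hj hjn) = n - 1 := by
  let p : Fin n := ⟨j - 1, by omega⟩
  let q : Fin n := ⟨j, hjn⟩
  have inversion_iff : ∀ a b : Fin n, a < b ∧ unimodalCycle n j hj hjn b <
      unimodalCycle n j hj hjn a ↔ a < q ∧ b = q ∨ a = p ∧ q < b := by
    intro a b
    simp only [Fin.lt_def, Fin.ext_iff, val_unimodalCycle, p, q]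
    split_ifs <;> omega
  have disjoint : _root_.Disjoint (Finset.Iio q ×ˢ {q}) ({p} ×ˢ Finset.Ioi q) :=
    Finset.disjoint_product.2 (.inr (by simp [q]))
  have eq_union : ({e | e.1 < e.2 ∧ unimodalCycle n j hj hjn e.2 < unimodalCycle n j hj hjn e.1} :
      Finset (Fin n × Fin n)) = Finset.Iio q ×ˢ {q} ∪ {p} ×ˢ Finset.Ioi q := by
    ext e
    simp only [Finset.mem_filter, Finset.mem_univ, true_and, Finset.mem_union, Finset.mem_product,
      Finset.mem_Iio, Finset.mem_Ioi, Finset.mem_singleton, inversion_iff]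
  rw [inversions, eq_union, Finset.card_union_of_disjoint disjoint]
  simp only [Finset.card_product, Finset.card_singleton, Fin.card_Iio, Fin.card_Ioi, q]
  omega

theorem signedWeight_unimodalCycle {R : Type*} [CommRing R] (x y : Fin n → R) (hj : 0 < j)
    (hjn : j < n) :
    signedWeight x y (unimodalCycle n j hj hjn) =
      (-1) ^ (n - 1) * ∏ i : Fin n, if (i : ℕ) < j then x i else y i := by
  rw [signedWeight_of_deficiencyOverlaps_eq_empty x y (unimodalCycle_mem_derangements hj hjn)
    (deficiencyOverlaps_unimodalCycle hj hjn), ← neg_one_pow_inversions, inversions_unimodalCycle]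
  simp only [unimodalCycle_apply_lt_iff, ← not_lt, ite_not]
  push_cast
  rfl

theorem exists_apply_lt_iff_le (hn : 0 < n) (hσ : σ ∈ derangements (Fin n))
    (h : deficiencyDrops σ = ∅) : ∃ j, 0 < j ∧ j < n ∧ ∀ i : Fin n, σ i < i ↔ j ≤ i := by
  have upper : Monotone fun i => σ i < i := (monotone_iff_forall_covBy _).2 fun a b hab ha => by
    by_contra hb
    exact Set.eq_empty_iff_forall_notMem.1 h (toLex (a, b))
      ⟨hab, ha, (not_lt.1 hb).lt_of_ne (hσ b).symm⟩
  have nonempty : {i | σ i < i}.Nonempty :=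
    ⟨⟨n - 1, by omega⟩, (Fin.le_def.2 (Nat.le_sub_one_of_lt (σ _).2)).lt_of_ne (hσ _)⟩
  obtain ⟨j, hj, hmin⟩ := wellFounded_lt.has_min _ nonempty
  exact ⟨j, (Nat.zero_le _).trans_lt hj, j.2, fun i =>
    ⟨fun hi => not_lt.1 (hmin i hi), fun hji => upper hji hj⟩⟩

theorem eq_unimodalCycle (hj : 0 < j) (hjn : j < n) (hσ : σ ∈ derangements (Fin n))
    (h : deficiencyOverlaps σ = ∅) (hlt : ∀ i : Fin n, σ i < i ↔ j ≤ i) :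
    σ = unimodalCycle n j hj hjn := by
  have exc : ∀ i : Fin n, (i : ℕ) < j → i < σ i := fun i hi =>
    (not_lt.1 ((hlt i).not.2 hi.not_ge)).lt_of_ne (hσ i).symm
  have below : ∀ i : Fin n, i + 1 < j → (σ i : ℕ) = i + 1 := fun i hi => by
    let t : Fin n := ⟨i + 1, by omega⟩
    have lower : i < σ i := exc i (by omega)
    have upper : σ i ≤ t :=
      apply_le_of_deficiencyOverlaps_eq_empty h (Nat.lt_succ_self i) (exc t hi)
    exact le_antisymm upper lower
  have above : ∀ i : Fin n, j < i → (σ i : ℕ) = i - 1 := fun i hi => by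
    let t : Fin n := ⟨i - 1, by omega⟩
    have upper : σ i < i := (hlt i).2 hi.le
    have lower : t ≤ σ i := by
      by_contra! hti
      exact Set.eq_empty_iff_forall_notMem.1 h (toLex (t, i))
        ⟨Nat.sub_one_lt_of_lt hi, (hlt t).2 (Nat.le_sub_one_of_lt hi), hti⟩
    exact le_antisymm (Nat.le_sub_one_of_lt upper) lower
  refine eq_of_eqOn_compl_pair (a := ⟨j - 1, by omega⟩) (b := ⟨j, hjn⟩) (fun k hka hkb => ?_) ?_
  · rw [Ne, Fin.ext_iff] at hka hkb
    rw [Fin.ext_iff, val_unimodalCycle]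
    grind
  · have := (hlt ⟨j, hjn⟩).2 le_rfl
    rw [Ne, Fin.ext_iff, val_unimodalCycle]
    grind

theorem unimodalCycle_injective {j k : ℕ} (hj : 0 < j) (hjn : j < n) (hk : 0 < k) (hkn : k < n)
    (h : unimodalCycle n j hj hjn = unimodalCycle n k hk hkn) : j = k := by
  have le_iff : ∀ i : Fin n, j ≤ i ↔ k ≤ i := fun i => by
    rw [← unimodalCycle_apply_lt_iff hj hjn, h, unimodalCycle_apply_lt_iff]
  exact le_antisymm ((le_iff ⟨k, hkn⟩).2 le_rfl) ((le_iff ⟨j, hjn⟩).1 le_rfl)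

end Fin

theorem stmt0_general {R : Type*} [CommRing R] {n : ℕ} (hn : 1 ≤ n) (x y : Fin n → R) :
    ∑ π ∈ derangementsF n,
      (-1) ^ inversions π * (∏ j ∈ RLMv π, x j) * (∏ j ∈ EXCv π, y j) =
    (-1) ^ (n - 1) *
      ∑ j ∈ Finset.Icc 1 (n - 1), ∏ i : Fin n, if (i : ℕ) < j then x i else y i := by
  classical
  rw [sum_derangementsF_eq_sum_signedWeight, sum_signedWeight_derangements, Finset.mul_sum]
  have bounds : ∀ j ∈ Finset.Icc 1 (n - 1), 0 < j ∧ j < n := by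
    intro j hj
    rw [Finset.mem_Icc] at hj
    omega
  symm
  refine Finset.sum_bij (fun j hj => unimodalCycle n j (bounds j hj).1 (bounds j hj).2)
    (fun j hj => ?_) (fun j hj k hk => unimodalCycle_injective _ _ _ _) (fun σ hσ => ?_)
    (fun j hj => (signedWeight_unimodalCycle x y _ _).symm)
  · simp only [Finset.mem_filter, Finset.mem_univ, true_and]
    exact ⟨unimodalCycle_mem_derangements _ _, deficiencyOverlaps_unimodalCycle _ _,
      deficiencyDrops_unimodalCycle _ _⟩
  · obtain ⟨hder, hoverlaps, hdrops⟩ := (Finset.mem_filter.1 hσ).2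
    obtain ⟨j, hj, hjn, hlt⟩ := exists_apply_lt_iff_le hn hder hdrops
    exact ⟨j, Finset.mem_Icc.2 (by omega), (eq_unimodalCycle hj hjn hder hoverlaps hlt).symm⟩

/-- Here `Fin n` represents `[n] = {1,…,n}` via `i ↦ i + 1`; the variable
`X (Sum.inl i)` is `x_{i+1}` and `X (Sum.inr i)` is `y_{i+1}`. -/
theorem stmt0 (n : ℕ) (hn : 1 ≤ n) :
    ∑ π ∈ derangementsF n,
      ((-1 : MvPolynomial (Fin n ⊕ Fin n) ℤ) ^ inversions π)
        * (∏ j ∈ RLMv π, X (Sum.inl j))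
        * (∏ j ∈ EXCv π, X (Sum.inr j))
    = (-1) ^ (n - 1) *
        ∑ j ∈ Finset.Icc 1 (n - 1),
          ∏ i : Fin n,
            (if (i : ℕ) < j then (X (Sum.inl i) : MvPolynomial (Fin n ⊕ Fin n) ℤ)
             else X (Sum.inr i)) :=
  stmt0_general hn _ _
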